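/- Let P be a classical propositional formula of degree d, let Φ be a proof in LKp of the sequent Γ ⊢ Δ and Φ' a proof in LKp of the sequent Γ' ⊢ Δ', both of degree strictly less than d. Then there exists a proof Ψ in LKp of the sequent Γ, Γ'∖P ⊢ Δ∖P, Δ' whose degree is strictly less than d, where Λ∖P denotes the list Λ with all occurrences of the formula P removed. -/

import Mathlib

/-!
The argument is semantic, and produces a proof `Ψ` without any cut. LKp is sound for two-valued
semantics, so the conclusions of `Φ` and `Φ'` are valid. The sequent `Γ, Γ'∖P ⊢ Δ∖P, Δ'` is then
valid too: a valuation making `P` false and all of `Γ` true makes a formula of `Δ∖P` true, and one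
making `P` and all of `Γ'∖P` true makes a formula of `Δ'` true. Finally, cut-free LKp is complete:
contraction turns the logical rules into invertible ones, so that reading them upwards preserves
validity and ends in sequents of atoms; a valid one has an atom common to both sides.
-/

/-!
The system LKp: the propositional fragment of Gentzen's sequent calculus LK.
Sequents are pairs of finite lists of formulas.  In the rules below, a list
written `Γ, P` in the paper is encoded as `Γ ++ [P]` on the left of the
turnstile and as `P :: Δ` on the right (matching the usual presentation
`Γ ⊢ P, Δ`).
-/

namespace LKp

/-- Classical propositional formulas over countably many atoms. -/
inductive Formula : Type where
  | atom : ℕ → Formula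
  | neg  : Formula → Formula
  | and  : Formula → Formula → Formula
  | or   : Formula → Formula → Formula
  | imp  : Formula → Formula → Formula
deriving DecidableEq

/-- A sequent `Γ ⊢ Δ` is a pair of finite lists of formulas. -/
abbrev Sequent := List Formula × List Formula

/-- The degree of a formula: `δ(a) = 1`, `δ(¬P) = 1 + δ(P)`,
`δ(P∧Q) = δ(P∨Q) = δ(P→Q) = 1 + max(δ(P), δ(Q))`. -/
def Formula.degree : Formula → ℕ
  | .atom _ => 1
  | .neg P => P.degree + 1
  | .and P Q => max P.degree Q.degree + 1
  | .or P Q => max P.degree Q.degree + 1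
  | .imp P Q => max P.degree Q.degree + 1

/-- Derivations in LKp: trees of rule instances, with `hyp` marking an open
leaf (a premise of the derivation). -/
inductive Deriv : Sequent → Type where
  | hyp (S : Sequent) : Deriv S
  | ax (P : Formula) : Deriv ([P], [P])
  | permL (Γ Γ' Δ : List Formula) (P Q : Formula) :
      Deriv (Γ ++ P :: Q :: Γ', Δ) → Deriv (Γ ++ Q :: P :: Γ', Δ)
  | permR (Γ Δ Δ' : List Formula) (P Q : Formula) :
      Deriv (Γ, Δ ++ P :: Q :: Δ') → Deriv (Γ, Δ ++ Q :: P :: Δ')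
  | contL (Γ Δ : List Formula) (P : Formula) :
      Deriv (Γ ++ [P, P], Δ) → Deriv (Γ ++ [P], Δ)
  | contR (Γ Δ : List Formula) (Q : Formula) :
      Deriv (Γ, Q :: Q :: Δ) → Deriv (Γ, Q :: Δ)
  | weakL (Γ Δ : List Formula) (P : Formula) :
      Deriv (Γ, Δ) → Deriv (Γ ++ [P], Δ)
  | weakR (Γ Δ : List Formula) (Q : Formula) :
      Deriv (Γ, Δ) → Deriv (Γ, Q :: Δ)
  | cut (Γ Δ Γ' Δ' : List Formula) (P : Formula) :
      Deriv (Γ, P :: Δ) → Deriv (Γ' ++ [P], Δ') → Deriv (Γ ++ Γ', Δ ++ Δ')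
  | andL1 (Γ Δ : List Formula) (P Q : Formula) :
      Deriv (Γ ++ [P], Δ) → Deriv (Γ ++ [P.and Q], Δ)
  | andL2 (Γ Δ : List Formula) (P Q : Formula) :
      Deriv (Γ ++ [Q], Δ) → Deriv (Γ ++ [P.and Q], Δ)
  | andR (Γ Δ : List Formula) (P Q : Formula) :
      Deriv (Γ, P :: Δ) → Deriv (Γ, Q :: Δ) → Deriv (Γ, (P.and Q) :: Δ)
  | orR1 (Γ Δ : List Formula) (P Q : Formula) :
      Deriv (Γ, P :: Δ) → Deriv (Γ, (P.or Q) :: Δ)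
  | orR2 (Γ Δ : List Formula) (P Q : Formula) :
      Deriv (Γ, Q :: Δ) → Deriv (Γ, (P.or Q) :: Δ)
  | orL (Γ Δ : List Formula) (P Q : Formula) :
      Deriv (Γ ++ [P], Δ) → Deriv (Γ ++ [Q], Δ) → Deriv (Γ ++ [P.or Q], Δ)
  | impR (Γ Δ : List Formula) (P Q : Formula) :
      Deriv (Γ ++ [P], Q :: Δ) → Deriv (Γ, (P.imp Q) :: Δ)
  | impL (Γ Δ : List Formula) (P Q : Formula) :
      Deriv (Γ, P :: Δ) → Deriv (Γ ++ [Q], Δ) → Deriv (Γ ++ [P.imp Q], Δ)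
  | negL (Γ Δ : List Formula) (P : Formula) :
      Deriv (Γ, P :: Δ) → Deriv (Γ ++ [P.neg], Δ)
  | negR (Γ Δ : List Formula) (P : Formula) :
      Deriv (Γ ++ [P], Δ) → Deriv (Γ, P.neg :: Δ)

/-- The degree of a derivation: the maximum of the degrees of the cut
formulas occurring in it (`0` if there is no cut). -/
def Deriv.degree : ∀ {S : Sequent}, Deriv S → ℕ
  | _, .hyp _ => 0
  | _, .ax _ => 0
  | _, .permL _ _ _ _ _ d => Deriv.degree d
  | _, .permR _ _ _ _ _ d => Deriv.degree d
  | _, .contL _ _ _ d => Deriv.degree d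
  | _, .contR _ _ _ d => Deriv.degree d
  | _, .weakL _ _ _ d => Deriv.degree d
  | _, .weakR _ _ _ d => Deriv.degree d
  | _, .cut _ _ _ _ P d₁ d₂ => max P.degree (max (Deriv.degree d₁) (Deriv.degree d₂))
  | _, .andL1 _ _ _ _ d => Deriv.degree d
  | _, .andL2 _ _ _ _ d => Deriv.degree d
  | _, .andR _ _ _ _ d₁ d₂ => max (Deriv.degree d₁) (Deriv.degree d₂)
  | _, .orR1 _ _ _ _ d => Deriv.degree d
  | _, .orR2 _ _ _ _ d => Deriv.degree d
  | _, .orL _ _ _ _ d₁ d₂ => max (Deriv.degree d₁) (Deriv.degree d₂)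
  | _, .impR _ _ _ _ d => Deriv.degree d
  | _, .impL _ _ _ _ d₁ d₂ => max (Deriv.degree d₁) (Deriv.degree d₂)
  | _, .negL _ _ _ d => Deriv.degree d
  | _, .negR _ _ _ d => Deriv.degree d

/-- A derivation is a proof when all of its leaves are axiom instances,
i.e. it has no open hypothesis. -/
def Deriv.isProof : ∀ {S : Sequent}, Deriv S → Prop
  | _, .hyp _ => False
  | _, .ax _ => True
  | _, .permL _ _ _ _ _ d => Deriv.isProof d
  | _, .permR _ _ _ _ _ d => Deriv.isProof d
  | _, .contL _ _ _ d => Deriv.isProof d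
  | _, .contR _ _ _ d => Deriv.isProof d
  | _, .weakL _ _ _ d => Deriv.isProof d
  | _, .weakR _ _ _ d => Deriv.isProof d
  | _, .cut _ _ _ _ _ d₁ d₂ => Deriv.isProof d₁ ∧ Deriv.isProof d₂
  | _, .andL1 _ _ _ _ d => Deriv.isProof d
  | _, .andL2 _ _ _ _ d => Deriv.isProof d
  | _, .andR _ _ _ _ d₁ d₂ => Deriv.isProof d₁ ∧ Deriv.isProof d₂
  | _, .orR1 _ _ _ _ d => Deriv.isProof d
  | _, .orR2 _ _ _ _ d => Deriv.isProof d
  | _, .orL _ _ _ _ d₁ d₂ => Deriv.isProof d₁ ∧ Deriv.isProof d₂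
  | _, .impR _ _ _ _ d => Deriv.isProof d
  | _, .impL _ _ _ _ d₁ d₂ => Deriv.isProof d₁ ∧ Deriv.isProof d₂
  | _, .negL _ _ _ d => Deriv.isProof d
  | _, .negR _ _ _ d => Deriv.isProof d

/-- The list of open premises (hypothesis leaves) of a derivation. -/
def Deriv.prems : ∀ {S : Sequent}, Deriv S → List Sequent
  | _, .hyp S => [S]
  | _, .ax _ => []
  | _, .permL _ _ _ _ _ d => Deriv.prems d
  | _, .permR _ _ _ _ _ d => Deriv.prems d
  | _, .contL _ _ _ d => Deriv.prems d
  | _, .contR _ _ _ d => Deriv.prems d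
  | _, .weakL _ _ _ d => Deriv.prems d
  | _, .weakR _ _ _ d => Deriv.prems d
  | _, .cut _ _ _ _ _ d₁ d₂ => Deriv.prems d₁ ++ Deriv.prems d₂
  | _, .andL1 _ _ _ _ d => Deriv.prems d
  | _, .andL2 _ _ _ _ d => Deriv.prems d
  | _, .andR _ _ _ _ d₁ d₂ => Deriv.prems d₁ ++ Deriv.prems d₂
  | _, .orR1 _ _ _ _ d => Deriv.prems d
  | _, .orR2 _ _ _ _ d => Deriv.prems d
  | _, .orL _ _ _ _ d₁ d₂ => Deriv.prems d₁ ++ Deriv.prems d₂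
  | _, .impR _ _ _ _ d => Deriv.prems d
  | _, .impL _ _ _ _ d₁ d₂ => Deriv.prems d₁ ++ Deriv.prems d₂
  | _, .negL _ _ _ d => Deriv.prems d
  | _, .negR _ _ _ d => Deriv.prems d

/-- A derivation is cut-free when it contains no instance of the cut rule. -/
def Deriv.cutFree : ∀ {S : Sequent}, Deriv S → Prop
  | _, .hyp _ => True
  | _, .ax _ => True
  | _, .permL _ _ _ _ _ d => Deriv.cutFree d
  | _, .permR _ _ _ _ _ d => Deriv.cutFree d
  | _, .contL _ _ _ d => Deriv.cutFree d
  | _, .contR _ _ _ d => Deriv.cutFree d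
  | _, .weakL _ _ _ d => Deriv.cutFree d
  | _, .weakR _ _ _ d => Deriv.cutFree d
  | _, .cut _ _ _ _ _ _ _ => False
  | _, .andL1 _ _ _ _ d => Deriv.cutFree d
  | _, .andL2 _ _ _ _ d => Deriv.cutFree d
  | _, .andR _ _ _ _ d₁ d₂ => Deriv.cutFree d₁ ∧ Deriv.cutFree d₂
  | _, .orR1 _ _ _ _ d => Deriv.cutFree d
  | _, .orR2 _ _ _ _ d => Deriv.cutFree d
  | _, .orL _ _ _ _ d₁ d₂ => Deriv.cutFree d₁ ∧ Deriv.cutFree d₂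
  | _, .impR _ _ _ _ d => Deriv.cutFree d
  | _, .impL _ _ _ _ d₁ d₂ => Deriv.cutFree d₁ ∧ Deriv.cutFree d₂
  | _, .negL _ _ _ d => Deriv.cutFree d
  | _, .negR _ _ _ d => Deriv.cutFree d

end LKp

namespace LKp

/-- Truth of a formula under a valuation of the atoms. -/
def Formula.Realize (v : ℕ → Prop) : Formula → Prop
  | .atom a => v a
  | .neg A => ¬ A.Realize v
  | .and A B => A.Realize v ∧ B.Realize v
  | .or A B => A.Realize v ∨ B.Realize v
  | .imp A B => A.Realize v → B.Realize v

/-- Truth of a sequent under a valuation: the conjunction of its left side implies the disjunction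
of its right side. -/
def Sequent.Realize (v : ℕ → Prop) (S : Sequent) : Prop :=
  (∀ A ∈ S.1, A.Realize v) → ∃ B ∈ S.2, B.Realize v

/-- A sequent is valid when it is true under every valuation. -/
def Sequent.Valid (S : Sequent) : Prop := ∀ v, S.Realize v

/-- Provability without the cut rule. -/
def CutFreeProvable (S : Sequent) : Prop := ∃ Φ : Deriv S, Φ.isProof ∧ Φ.cutFree

theorem Formula.degree_pos (P : Formula) : 0 < P.degree := by
  cases P <;> exact Nat.succ_pos _

theorem Deriv.degree_eq_zero_of_cutFree {S : Sequent} (Φ : Deriv S) (h : Φ.cutFree) :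
    Φ.degree = 0 := by
  induction Φ <;> simp_all [Deriv.cutFree, Deriv.degree]

namespace Sequent

variable {v : ℕ → Prop} {Γ Γ' Δ Δ' : List Formula} {A B : Formula}

theorem Realize.mono (h : Realize v (Γ, Δ)) (hΓ : Γ ⊆ Γ') (hΔ : Δ ⊆ Δ') : Realize v (Γ', Δ') :=
  fun hyps =>
    let ⟨B, hB, hv⟩ := h fun A hA => hyps A (hΓ hA)
    ⟨B, hΔ hB, hv⟩

theorem realize_cons_left : Realize v (A :: Γ, Δ) ↔ (A.Realize v → Realize v (Γ, Δ)) := by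
  simp only [Realize, List.forall_mem_cons, and_imp]

theorem realize_cons_right : Realize v (Γ, A :: Δ) ↔ (¬ A.Realize v → Realize v (Γ, Δ)) := by
  simp only [Realize, List.exists_mem_cons_iff]
  tauto

theorem realize_append_singleton_left :
    Realize v (Γ ++ [A], Δ) ↔ (A.Realize v → Realize v (Γ, Δ)) := by
  have hp := List.perm_append_singleton A Γ
  rw [← realize_cons_left]
  exact ⟨fun h => h.mono hp.subset (.refl _), fun h => h.mono hp.symm.subset (.refl _)⟩

theorem valid_neg_left : Valid (A.neg :: Γ, Δ) ↔ Valid (Γ, A :: Δ) := by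
  simp only [Valid, realize_cons_left, realize_cons_right, Formula.Realize]

theorem valid_neg_right : Valid (Γ, A.neg :: Δ) ↔ Valid (A :: Γ, Δ) := by
  simp only [Valid, realize_cons_left, realize_cons_right, Formula.Realize, not_not]

theorem valid_and_left : Valid (A.and B :: Γ, Δ) ↔ Valid (A :: B :: Γ, Δ) := by
  simp only [Valid, realize_cons_left, Formula.Realize, and_imp]

theorem valid_and_right :
    Valid (Γ, A.and B :: Δ) ↔ Valid (Γ, A :: Δ) ∧ Valid (Γ, B :: Δ) := by
  simp only [Valid, realize_cons_right, Formula.Realize, not_and_or, or_imp, forall_and]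

theorem valid_or_left :
    Valid (A.or B :: Γ, Δ) ↔ Valid (A :: Γ, Δ) ∧ Valid (B :: Γ, Δ) := by
  simp only [Valid, realize_cons_left, Formula.Realize, or_imp, forall_and]

theorem valid_or_right : Valid (Γ, A.or B :: Δ) ↔ Valid (Γ, A :: B :: Δ) := by
  simp only [Valid, realize_cons_right, Formula.Realize, not_or, and_imp]

theorem valid_imp_left :
    Valid (A.imp B :: Γ, Δ) ↔ Valid (Γ, A :: Δ) ∧ Valid (B :: Γ, Δ) := by
  simp only [Valid, realize_cons_left, realize_cons_right, Formula.Realize, ← forall_and]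
  exact forall_congr' fun v => by tauto

theorem valid_imp_right : Valid (Γ, A.imp B :: Δ) ↔ Valid (A :: Γ, B :: Δ) := by
  simp only [Valid, realize_cons_left, realize_cons_right, Formula.Realize]
  exact forall_congr' fun v => by tauto

theorem Realize.mix (h : Realize v (Γ, Δ)) (h' : Realize v (Γ', Δ')) (P : Formula) :
    Realize v (Γ ++ Γ'.filter (· ≠ P), Δ.filter (· ≠ P) ++ Δ') := by
  simp only [Realize, List.mem_append, List.mem_filter, decide_eq_true_eq] at h h' ⊢
  intro hyps
  by_cases hP : P.Realize v
  · obtain ⟨B, hB, hv⟩ := h' fun A hA => by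
      by_cases hAP : A = P
      · exact hAP ▸ hP
      · exact hyps A (.inr ⟨hA, hAP⟩)
    exact ⟨B, .inr hB, hv⟩
  · obtain ⟨B, hB, hv⟩ := h fun A hA => hyps A (.inl hA)
    exact ⟨B, .inl ⟨hB, fun hBP => hP (hBP ▸ hv)⟩, hv⟩

end Sequent

open Sequent in
theorem Deriv.valid_of_isProof {S : Sequent} (Φ : Deriv S) (h : Φ.isProof) : S.Valid := by
  intro v
  induction Φ with
  | hyp => exact h.elim
  | ax P => exact fun hyps => ⟨P, List.mem_singleton_self P, hyps P (List.mem_singleton_self P)⟩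
  | permL _ _ _ _ _ _ ih | permR _ _ _ _ _ _ ih | contL _ _ _ _ ih | contR _ _ _ _ ih
  | weakL _ _ _ _ ih | weakR _ _ _ _ ih => exact (ih h).mono (by grind) (by grind)
  | cut Γ Δ Γ' Δ' P _ _ ih₁ ih₂ =>
    by_cases hP : P.Realize v
    · exact (realize_append_singleton_left.mp (ih₂ h.2) hP).mono (by simp) (by simp)
    · exact (realize_cons_right.mp (ih₁ h.1) hP).mono (by simp) (by simp)
  | andL1 _ _ _ _ _ ih | andL2 _ _ _ _ _ ih | orR1 _ _ _ _ _ ih | orR2 _ _ _ _ _ ih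
  | impR _ _ _ _ _ ih | negL _ _ _ _ ih | negR _ _ _ _ ih =>
    have premise := ih h
    simp only [realize_append_singleton_left, realize_cons_right, Formula.Realize] at premise ⊢
    tauto
  | andR _ _ _ _ _ _ ih₁ ih₂ | orL _ _ _ _ _ _ ih₁ ih₂ | impL _ _ _ _ _ _ ih₁ ih₂ =>
    have premise₁ := ih₁ h.1
    have premise₂ := ih₂ h.2
    simp only [realize_append_singleton_left, realize_cons_right, Formula.Realize]
      at premise₁ premise₂ ⊢
    tauto

section StructuralRules

variable {α : Type*} {p : List α → Prop}

/-- The induction on the permutation generalizes over a prefix, as `swap` acts at any depth. -/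
theorem of_perm_of_swap
    (swap : ∀ l l' a b, p (l ++ a :: b :: l') → p (l ++ b :: a :: l'))
    {l l' : List α} (h : l.Perm l') (hl : p l) : p l' := by
  suffices ∀ k, p (k ++ l) → p (k ++ l') from this [] hl
  clear hl
  induction h with
  | nil => exact fun _ hk => hk
  | cons a _ ih => exact fun k hk => by simpa using ih (k ++ [a]) (by simpa using hk)
  | swap a b l => exact fun k => swap k l b a
  | trans _ _ ih₁ ih₂ => exact fun k hk => ih₂ k (ih₁ k hk)

theorem of_subset_of_structural
    (perm : ∀ {l l' : List α}, l.Perm l' → p l → p l')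
    (weaken : ∀ a l, p l → p (a :: l)) (contract : ∀ a l, p (a :: a :: l) → p (a :: l))
    {l l' : List α} (h : l ⊆ l') (hl : p l) : p l' := by
  have weakened (k : List α) : p (k ++ l) := by
    induction k with
    | nil => exact hl
    | cons a k ih => exact weaken a _ ih
  have absorb (k : List α) (hk : k ⊆ l') (hp : p (k ++ l')) : p l' := by
    induction k with
    | nil => exact hp
    | cons a k ih =>
      obtain ⟨ha, hk⟩ := List.cons_subset.mp hk
      obtain ⟨s, t, rfl⟩ := List.append_of_mem ha
      have front : (k ++ (s ++ a :: t)).Perm (a :: (k ++ (s ++ t))) :=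
        (List.perm_middle.append_left k).trans List.perm_middle
      exact ih hk (perm front.symm (contract a _ (perm (front.cons a) hp)))
  exact absorb l h (perm List.perm_append_comm (weakened l'))

end StructuralRules

namespace CutFreeProvable

variable {Γ Γ' Δ Δ' : List Formula} {A B : Formula}

theorem perm_left (h : CutFreeProvable (Γ, Δ)) (hΓ : Γ.Perm Γ') : CutFreeProvable (Γ', Δ) :=
  of_perm_of_swap (p := fun Γ => CutFreeProvable (Γ, Δ))
    (fun _ _ _ _ ⟨Φ, hΦ⟩ => ⟨.permL _ _ _ _ _ Φ, hΦ⟩) hΓ h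

theorem perm_right (h : CutFreeProvable (Γ, Δ)) (hΔ : Δ.Perm Δ') : CutFreeProvable (Γ, Δ') :=
  of_perm_of_swap (p := fun Δ => CutFreeProvable (Γ, Δ))
    (fun _ _ _ _ ⟨Φ, hΦ⟩ => ⟨.permR _ _ _ _ _ Φ, hΦ⟩) hΔ h

theorem weaken_left (A : Formula) (h : CutFreeProvable (Γ, Δ)) : CutFreeProvable (A :: Γ, Δ) :=
  let ⟨Φ, hΦ⟩ := h
  perm_left ⟨.weakL Γ Δ A Φ, hΦ⟩ (List.perm_append_singleton A Γ)

theorem contract_left (h : CutFreeProvable (A :: A :: Γ, Δ)) : CutFreeProvable (A :: Γ, Δ) :=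
  let ⟨Φ, hΦ⟩ := h.perm_left (List.perm_append_comm (l₁ := [A, A]))
  perm_left ⟨.contL Γ Δ A Φ, hΦ⟩ (List.perm_append_singleton A Γ)

theorem mono_left (h : CutFreeProvable (Γ, Δ)) (hΓ : Γ ⊆ Γ') : CutFreeProvable (Γ', Δ) :=
  of_subset_of_structural (p := fun Γ => CutFreeProvable (Γ, Δ))
    (fun hp h => h.perm_left hp) (fun A _ h => h.weaken_left A) (fun _ _ h => h.contract_left) hΓ h

theorem mono_right (h : CutFreeProvable (Γ, Δ)) (hΔ : Δ ⊆ Δ') : CutFreeProvable (Γ, Δ') :=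
  of_subset_of_structural (p := fun Δ => CutFreeProvable (Γ, Δ))
    (fun hp h => h.perm_right hp) (fun _ _ ⟨Φ, hΦ⟩ => ⟨.weakR _ _ _ Φ, hΦ⟩)
    (fun _ _ ⟨Φ, hΦ⟩ => ⟨.contR _ _ _ Φ, hΦ⟩) hΔ h

theorem append_singleton_left_iff :
    CutFreeProvable (Γ ++ [A], Δ) ↔ CutFreeProvable (A :: Γ, Δ) :=
  have hp := List.perm_append_singleton A Γ
  ⟨fun h => h.perm_left hp, fun h => h.perm_left hp.symm⟩

theorem of_mem_of_mem (hΓ : A ∈ Γ) (hΔ : A ∈ Δ) : CutFreeProvable (Γ, Δ) :=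
  have axiomA : CutFreeProvable ([A], [A]) := ⟨.ax A, trivial, trivial⟩
  (axiomA.mono_left (by simpa using hΓ)).mono_right (by simpa using hΔ)

theorem neg_left (h : CutFreeProvable (Γ, A :: Δ)) : CutFreeProvable (A.neg :: Γ, Δ) :=
  let ⟨Φ, hΦ⟩ := h
  append_singleton_left_iff.mp ⟨.negL _ _ _ Φ, hΦ⟩

theorem neg_right (h : CutFreeProvable (A :: Γ, Δ)) : CutFreeProvable (Γ, A.neg :: Δ) :=
  let ⟨Φ, hΦ⟩ := append_singleton_left_iff.mpr h
  ⟨.negR _ _ _ Φ, hΦ⟩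

/-- The two left rules for `∧` are applied to `A` and `B` in turn, and the two copies of `A ∧ B`
are then contracted. -/
theorem and_left (h : CutFreeProvable (A :: B :: Γ, Δ)) : CutFreeProvable (A.and B :: Γ, Δ) := by
  obtain ⟨Φ, hΦ⟩ := append_singleton_left_iff.mpr h
  have left : CutFreeProvable (A.and B :: B :: Γ, Δ) :=
    append_singleton_left_iff.mp ⟨.andL1 _ _ _ _ Φ, hΦ⟩
  obtain ⟨Φ', hΦ'⟩ := append_singleton_left_iff.mpr (left.perm_left (.swap _ _ _))
  have both : CutFreeProvable (A.and B :: A.and B :: Γ, Δ) :=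
    append_singleton_left_iff.mp ⟨.andL2 _ _ _ _ Φ', hΦ'⟩
  exact both.contract_left

theorem and_right (hA : CutFreeProvable (Γ, A :: Δ)) (hB : CutFreeProvable (Γ, B :: Δ)) :
    CutFreeProvable (Γ, A.and B :: Δ) :=
  let ⟨Φ, hΦ, cΦ⟩ := hA
  let ⟨Ψ, hΨ, cΨ⟩ := hB
  ⟨.andR _ _ _ _ Φ Ψ, ⟨hΦ, hΨ⟩, ⟨cΦ, cΨ⟩⟩

theorem or_left (hA : CutFreeProvable (A :: Γ, Δ)) (hB : CutFreeProvable (B :: Γ, Δ)) :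
    CutFreeProvable (A.or B :: Γ, Δ) :=
  let ⟨Φ, hΦ, cΦ⟩ := append_singleton_left_iff.mpr hA
  let ⟨Ψ, hΨ, cΨ⟩ := append_singleton_left_iff.mpr hB
  append_singleton_left_iff.mp ⟨.orL _ _ _ _ Φ Ψ, ⟨hΦ, hΨ⟩, ⟨cΦ, cΨ⟩⟩

theorem or_right (h : CutFreeProvable (Γ, A :: B :: Δ)) : CutFreeProvable (Γ, A.or B :: Δ) := by
  obtain ⟨Φ, hΦ⟩ := h
  have left : CutFreeProvable (Γ, A.or B :: B :: Δ) := ⟨.orR1 _ _ _ _ Φ, hΦ⟩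
  obtain ⟨Φ', hΦ'⟩ := left.perm_right (.swap _ _ _)
  exact ⟨.contR _ _ _ (.orR2 _ _ _ _ Φ'), hΦ'⟩

theorem imp_left (hA : CutFreeProvable (Γ, A :: Δ)) (hB : CutFreeProvable (B :: Γ, Δ)) :
    CutFreeProvable (A.imp B :: Γ, Δ) :=
  let ⟨Φ, hΦ, cΦ⟩ := hA
  let ⟨Ψ, hΨ, cΨ⟩ := append_singleton_left_iff.mpr hB
  append_singleton_left_iff.mp ⟨.impL _ _ _ _ Φ Ψ, ⟨hΦ, hΨ⟩, ⟨cΦ, cΨ⟩⟩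

theorem imp_right (h : CutFreeProvable (A :: Γ, B :: Δ)) : CutFreeProvable (Γ, A.imp B :: Δ) :=
  let ⟨Φ, hΦ⟩ := append_singleton_left_iff.mpr h
  ⟨.impR _ _ _ _ Φ, hΦ⟩

theorem of_valid_atoms {a b : List ℕ} (h : Sequent.Valid (a.map .atom, b.map .atom)) :
    CutFreeProvable (a.map .atom, b.map .atom) := by
  -- The valuation making exactly the atoms on the left true yields an atom common to both sides.
  obtain ⟨B, hB, hv⟩ := h (· ∈ a) (by simp [Formula.Realize])
  obtain ⟨n, -, rfl⟩ := List.mem_map.mp hB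
  exact of_mem_of_mem (List.mem_map_of_mem hv) hB

open Sequent in
theorem of_valid_append_atoms (a b : List ℕ) : ∀ Γ Δ : List Formula,
    Valid (Γ ++ a.map .atom, Δ ++ b.map .atom) →
      CutFreeProvable (Γ ++ a.map .atom, Δ ++ b.map .atom)
  | [], [], h => of_valid_atoms h
  | .atom n :: Γ, Δ, h =>
    have hp : (Γ ++ (n :: a).map Formula.atom).Perm (.atom n :: Γ ++ a.map .atom) :=
      List.perm_middle
    (of_valid_append_atoms (n :: a) b Γ Δ fun v => (h v).mono hp.symm.subset (.refl _)).perm_left hp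
  | .neg A :: Γ, Δ, h => neg_left (of_valid_append_atoms a b Γ (A :: Δ) (valid_neg_left.mp h))
  | .and A B :: Γ, Δ, h =>
    and_left (of_valid_append_atoms a b (A :: B :: Γ) Δ (valid_and_left.mp h))
  | .or A B :: Γ, Δ, h =>
    have ⟨hA, hB⟩ := valid_or_left.mp h
    or_left (of_valid_append_atoms a b (A :: Γ) Δ hA) (of_valid_append_atoms a b (B :: Γ) Δ hB)
  | .imp A B :: Γ, Δ, h =>
    have ⟨hA, hB⟩ := valid_imp_left.mp h
    imp_left (of_valid_append_atoms a b Γ (A :: Δ) hA) (of_valid_append_atoms a b (B :: Γ) Δ hB)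
  | [], .atom n :: Δ, h =>
    have hp : (Δ ++ (n :: b).map Formula.atom).Perm (.atom n :: Δ ++ b.map .atom) :=
      List.perm_middle
    (of_valid_append_atoms a (n :: b) [] Δ fun v =>
      (h v).mono (.refl _) hp.symm.subset).perm_right hp
  | [], .neg A :: Δ, h => neg_right (of_valid_append_atoms a b [A] Δ (valid_neg_right.mp h))
  | [], .and A B :: Δ, h =>
    have ⟨hA, hB⟩ := valid_and_right.mp h
    and_right (of_valid_append_atoms a b [] (A :: Δ) hA) (of_valid_append_atoms a b [] (B :: Δ) hB)
  | [], .or A B :: Δ, h =>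
    or_right (of_valid_append_atoms a b [] (A :: B :: Δ) (valid_or_right.mp h))
  | [], .imp A B :: Δ, h =>
    imp_right (of_valid_append_atoms a b [A] (B :: Δ) (valid_imp_right.mp h))
-- `sizeOf Γ` also counts the length of `Γ`, hence does not decrease in the case `A.and B :: Γ`.
termination_by Γ Δ => (Γ.map sizeOf).sum + (Δ.map sizeOf).sum
decreasing_by all_goals simp <;> omega

theorem of_valid {S : Sequent} (h : S.Valid) : CutFreeProvable S := by
  simpa using of_valid_append_atoms [] [] S.1 S.2 (by simpa using h)

end CutFreeProvable

theorem mix_lemma_general (P : Formula) (Γ Δ Γ' Δ' : List Formula)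
    (Φ : Deriv (Γ, Δ)) (Φ' : Deriv (Γ', Δ')) (hΦ : Φ.isProof) (hΦ' : Φ'.isProof) :
    ∃ Ψ : Deriv (Γ ++ Γ'.filter (· ≠ P), Δ.filter (· ≠ P) ++ Δ'), Ψ.isProof ∧ Ψ.cutFree :=
  CutFreeProvable.of_valid fun v =>
    (Φ.valid_of_isProof hΦ v).mix (Φ'.valid_of_isProof hΦ' v) P

/-- Lemma 2 of the cut-elimination argument.
Let `P` be a formula of degree `d`, let `Φ` be a proof in LKp of `Γ ⊢ Δ` and
`Φ'` a proof in LKp of `Γ' ⊢ Δ'`, both of degree strictly less than `d`.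
Then there is a proof `Ψ` in LKp of `Γ, Γ'∖P ⊢ Δ∖P, Δ'` of degree strictly
less than `d`, where `Λ∖P` removes all occurrences of `P` from the list `Λ`. -/
theorem mix_lemma (P : Formula) (d : ℕ) (hP : P.degree = d)
    (Γ Δ Γ' Δ' : List Formula)
    (Φ : Deriv (Γ, Δ)) (Φ' : Deriv (Γ', Δ'))
    (hΦ : Φ.isProof) (hΦ' : Φ'.isProof)
    (hdeg : Φ.degree < d) (hdeg' : Φ'.degree < d) :
    ∃ Ψ : Deriv (Γ ++ Γ'.filter (· ≠ P), Δ.filter (· ≠ P) ++ Δ'),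
      Ψ.isProof ∧ Ψ.degree < d := by
  obtain ⟨Ψ, hΨ, hcut⟩ := mix_lemma_general P Γ Δ Γ' Δ' Φ Φ' hΦ hΦ'
  exact ⟨Ψ, hΨ, by rw [Ψ.degree_eq_zero_of_cutFree hcut, ← hP]; exact P.degree_pos⟩

end LKp
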